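/- Let m, n be positive integers, A ∈ M_{n,m}(𝔽_q((z⁻¹))) non-degenerate, and (y_i)_{i≥1} a sequence of best approximations related to Aᵀ, writing y_i = (y_{i1}, …, y_{in}) and Y_i = ‖y_i‖. Then for almost all θ = (θ_1, …, θ_n) ∈ 𝔽_q((z⁻¹))ⁿ with respect to the Haar measure on the additive group 𝔽_q((z⁻¹))ⁿ, the following holds: for every δ > 0, the inequality ⟨y_{i1}θ_1 + ⋯ + y_{in}θ_n⟩ ≥ Y_i^{−δ} holds for all sufficiently large i. -/

import Mathlib

/-!
Common setup: the field `𝔽_q((z⁻¹))` of formal power series over a finite field `K` of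
cardinality `q`, modeled as the field `FF K` of formal Laurent series in `t = z⁻¹`,
together with its non-Archimedean norm, the embedding of the polynomial ring `𝔽_q[z]`,
distances to polynomial (vectors), Diophantine exponents, `Bad` sets, continued fractions
and best approximation sequences.
-/

open scoped Classical ENNReal NNReal
open Filter

noncomputable section

namespace FPSDA

variable (K : Type*) [Field K] [Fintype K]

/-- The field `𝔽_q((z⁻¹))` of formal power series in `z⁻¹` over the finite field `K = 𝔽_q`,
modeled as the field of formal Laurent series in the variable `t = z⁻¹`. -/
def FF : Type _ := LaurentSeries K

instance : Field (FF K) := inferInstanceAs (Field (LaurentSeries K))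

variable {K}

/-- The identity map, viewing an element of `𝔽_q((z⁻¹))` as a Laurent series in `t = z⁻¹`. -/
def toL (x : FF K) : LaurentSeries K := x

@[simp] lemma toL_zero : toL (0 : FF K) = 0 := rfl
@[simp] lemma toL_add (x y : FF K) : toL (x + y) = toL x + toL y := rfl
@[simp] lemma toL_neg (x : FF K) : toL (-x) = -toL x := rfl
@[simp] lemma toL_sub (x y : FF K) : toL (x - y) = toL x - toL y := rfl
lemma toL_eq_zero {x : FF K} : toL x = 0 ↔ x = 0 := Iff.rfl

/-- The norm `‖x‖ = q ^ (deg x)` on `𝔽_q((z⁻¹))`, where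
`deg x = - (order of x as a Laurent series in z⁻¹)`; `‖0‖ = 0`. -/
def fnorm (x : FF K) : ℝ :=
  if toL x = 0 then 0 else (Fintype.card K : ℝ) ^ (-(toL x).order)

lemma one_le_q : (1 : ℝ) ≤ (Fintype.card K : ℝ) := by
  exact_mod_cast Fintype.card_pos

lemma fnorm_nonneg (x : FF K) : 0 ≤ fnorm x := by
  unfold fnorm
  split_ifs
  · exact le_refl 0
  · exact zpow_nonneg (by positivity) _

lemma fnorm_eq_zero {x : FF K} : fnorm x = 0 ↔ x = 0 := by
  unfold fnorm
  split_ifs with h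
  · exact ⟨fun _ => toL_eq_zero.mp h, fun _ => rfl⟩
  · constructor
    · intro hc
      exact absurd hc (zpow_ne_zero _ (by
        have h0 : (0:ℝ) < (Fintype.card K : ℝ) := by positivity
        exact ne_of_gt h0))
    · intro hc
      exact absurd (toL_eq_zero.mpr hc) h

lemma fnorm_neg (x : FF K) : fnorm (-x) = fnorm x := by
  unfold fnorm
  rw [toL_neg]
  simp [neg_eq_zero, HahnSeries.order_neg]

lemma fnorm_add_le (x y : FF K) : fnorm (x + y) ≤ max (fnorm x) (fnorm y) := by
  by_cases hxy : x + y = 0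
  · rw [fnorm_eq_zero.mpr hxy]
    exact le_max_of_le_left (fnorm_nonneg x)
  by_cases hx : x = 0
  · rw [hx, zero_add]
    exact le_max_right _ _
  by_cases hy : y = 0
  · rw [hy, add_zero]
    exact le_max_left _ _
  have horder : min (toL x).order (toL y).order ≤ (toL (x + y)).order := by
    rw [toL_add]
    exact HahnSeries.min_order_le_order_add (show toL x + toL y ≠ 0 from hxy)
  have h1 : fnorm (x + y) = (Fintype.card K : ℝ) ^ (-(toL (x+y)).order) := by
    unfold fnorm
    rw [if_neg (show toL (x + y) ≠ 0 from hxy)]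
  rcases le_total (toL x).order (toL y).order with h | h
  · have h2 : (toL x).order ≤ (toL (x+y)).order := le_trans (by simp [min_eq_left h]) horder
    refine le_max_of_le_left ?_
    rw [h1]
    unfold fnorm
    rw [if_neg (show toL x ≠ 0 from hx)]
    exact zpow_le_zpow_right₀ one_le_q (by omega)
  · have h2 : (toL y).order ≤ (toL (x+y)).order := le_trans (by simp [min_eq_right h]) horder
    refine le_max_of_le_right ?_
    rw [h1]
    unfold fnorm
    rw [if_neg (show toL y ≠ 0 from hy)]
    exact zpow_le_zpow_right₀ one_le_q (by omega)

/-- The (ultra)metric `dist x y = ‖x - y‖` on `𝔽_q((z⁻¹))`. -/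
instance : MetricSpace (FF K) where
  dist x y := fnorm (x - y)
  dist_self x := by
    show fnorm (x - x) = 0
    rw [sub_self]
    exact fnorm_eq_zero.mpr rfl
  dist_comm x y := by
    show fnorm (x - y) = fnorm (y - x)
    have h : x - y = -(y - x) := by ring
    rw [h, fnorm_neg]
  dist_triangle x y z := by
    show fnorm (x - z) ≤ fnorm (x - y) + fnorm (y - z)
    have h : x - z = (x - y) + (y - z) := by ring
    calc fnorm (x - z) ≤ max (fnorm (x - y)) (fnorm (y - z)) := by
          rw [h]; exact fnorm_add_le _ _
      _ ≤ fnorm (x - y) + fnorm (y - z) :=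
        max_le (le_add_of_nonneg_right (fnorm_nonneg _)) (le_add_of_nonneg_left (fnorm_nonneg _))
  eq_of_dist_eq_zero := by
    intro x y h
    have h' : x - y = 0 := fnorm_eq_zero.mp h
    exact sub_eq_zero.mp h'

instance : MeasurableSpace (FF K) := borel _
instance : BorelSpace (FF K) := ⟨rfl⟩

/-- The canonical embedding of the polynomial ring `𝔽_q[z]` into `𝔽_q((z⁻¹))`:
the variable `z` is sent to `t⁻¹ = single (-1) 1`. -/
def polyF (P : Polynomial K) : FF K :=
  Polynomial.aeval (HahnSeries.single (-1 : ℤ) (1 : K)) P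

/-- Supremum norm of a vector with entries in `𝔽_q((z⁻¹))`. -/
def vnorm {ι : Type*} [Fintype ι] (v : ι → FF K) : ℝ := ⨆ i, fnorm (v i)

/-- `⟨v⟩`, the distance from the vector `v` to the nearest polynomial vector. -/
def vdist {ι : Type*} [Fintype ι] (v : ι → FF K) : ℝ :=
  ⨅ y : ι → Polynomial K, vnorm (fun i => v i - polyF (y i))

/-- `⟨x⟩`, the distance from the scalar `x` to the nearest polynomial. -/
def sdist (x : FF K) : ℝ := ⨅ y : Polynomial K, fnorm (x - polyF y)

/-- The fractional part `{x} = Σ_{i ≥ 1} a_i z^{-i}` of `x = Σ_i a_i z^{-i}`. -/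
def fracPart (x : FF K) : FF K :=
  (⟨fun i => if 1 ≤ i then (toL x).coeff i else 0, (toL x).isPWO_support'.mono (by
      intro i hi
      by_cases h : (1:ℤ) ≤ i
      · simpa [Function.mem_support, h] using hi
      · simp [Function.mem_support, h] at hi)⟩ : LaurentSeries K)

/-- The integer part `[x] = Σ_{i ≤ 0} a_i z^{-i}` of `x = Σ_i a_i z^{-i}`, as a polynomial
in `z`. -/
def intPoly (x : FF K) : Polynomial K :=
  ∑ i ∈ Finset.range ((-(toL x).order).toNat + 1),
    Polynomial.monomial i ((toL x).coeff (-(i : ℤ)))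

/-- `x ∈ 𝔽_q((z⁻¹))` is irrational if it is not in `𝔽_q(z)`, i.e. is not a ratio of two
polynomials in `z`. -/
def FIrrational (x : FF K) : Prop :=
  ∀ P Q : Polynomial K, Q ≠ 0 → x * polyF Q ≠ polyF P

section Exponents

variable {m n : ℕ}

/-- The norm `‖x‖ = max_j ‖x_j‖` of a polynomial vector `x`. -/
def pnorm {ι : Type*} [Fintype ι] (x : ι → Polynomial K) : ℝ :=
  vnorm (fun i => (polyF (x i) : FF K))

/-- The system `⟨A x - θ⟩ ≤ H^{-ω}`, `‖x‖ ≤ H` has a polynomial solution `x`. -/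
def Solv (A : Matrix (Fin n) (Fin m) (FF K)) (θ : Fin n → FF K) (ω H : ℝ) : Prop :=
  ∃ x : Fin m → Polynomial K,
    vdist (A.mulVec (fun j => polyF (x j)) - θ) ≤ H ^ (-ω) ∧ pnorm x ≤ H

/-- The system `⟨A x⟩ ≤ H^{-ω}`, `‖x‖ ≤ H` has a nonzero polynomial solution `x`. -/
def SolvHom (A : Matrix (Fin n) (Fin m) (FF K)) (ω H : ℝ) : Prop :=
  ∃ x : Fin m → Polynomial K, x ≠ 0 ∧
    vdist (A.mulVec (fun j => polyF (x j))) ≤ H ^ (-ω) ∧ pnorm x ≤ H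

/-- The inhomogeneous exponent `ω(A, θ)`: the supremum (in `[0,∞]`) of all `ω` such that
for arbitrarily large `H` the system `⟨A x - θ⟩ ≤ H^{-ω}`, `‖x‖ ≤ H` has a polynomial
solution. -/
def omegaInhom (A : Matrix (Fin n) (Fin m) (FF K)) (θ : Fin n → FF K) : ℝ≥0∞ :=
  ⨆ (ω : ℝ) (_ : ∀ H₀ : ℝ, ∃ H : ℝ, H₀ ≤ H ∧ Solv A θ ω H), ENNReal.ofReal ω

/-- The uniform inhomogeneous exponent `ω̂(A, θ)`: as `ω(A, θ)`, but with a solution for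
all sufficiently large `H`. -/
def omegaHatInhom (A : Matrix (Fin n) (Fin m) (FF K)) (θ : Fin n → FF K) : ℝ≥0∞ :=
  ⨆ (ω : ℝ) (_ : ∃ H₀ : ℝ, ∀ H : ℝ, H₀ ≤ H → Solv A θ ω H), ENNReal.ofReal ω

/-- The homogeneous exponent `ω(A)`. -/
def omegaHom (A : Matrix (Fin n) (Fin m) (FF K)) : ℝ≥0∞ :=
  ⨆ (ω : ℝ) (_ : ∀ H₀ : ℝ, ∃ H : ℝ, H₀ ≤ H ∧ SolvHom A ω H), ENNReal.ofReal ω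

/-- The uniform homogeneous exponent `ω̂(A)`. -/
def omegaHatHom (A : Matrix (Fin n) (Fin m) (FF K)) : ℝ≥0∞ :=
  ⨆ (ω : ℝ) (_ : ∃ H₀ : ℝ, ∀ H : ℝ, H₀ ≤ H → SolvHom A ω H), ENNReal.ofReal ω

/-- `A` is non-degenerate: the `𝔽_q[z]`-module `Aᵀ 𝔽_q[z]ⁿ + 𝔽_q[z]^m ⊆ 𝔽_q((z⁻¹))^m` has
rank `m + n` over `𝔽_q[z]`, i.e. its `m + n` natural generators are linearly independent
over `𝔽_q[z]`; equivalently, no nonzero polynomial vector `u` makes `Aᵀ u` a polynomial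
vector. -/
def Nondegenerate (A : Matrix (Fin n) (Fin m) (FF K)) : Prop :=
  ∀ u : Fin n → Polynomial K,
    (∃ v : Fin m → Polynomial K,
      A.transpose.mulVec (fun i => polyF (u i)) = fun j => polyF (v j)) → u = 0

/-- `liminf_{x ∈ 𝔽_q[z]^m, ‖x‖ → ∞} ‖x‖^{m/n} ⟨A x - θ⟩`, computed in `[0, ∞]`. -/
def badLiminf (A : Matrix (Fin n) (Fin m) (FF K)) (θ : Fin n → FF K) : ℝ≥0∞ :=
  Filter.liminf
    (fun x : Fin m → Polynomial K =>
      ENNReal.ofReal ((pnorm x) ^ ((m : ℝ) / (n : ℝ)) *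
        vdist (A.mulVec (fun j => polyF (x j)) - θ)))
    (Filter.comap (fun x : Fin m → Polynomial K => pnorm x) Filter.atTop)

/-- The set `Bad^ε(A)` of `θ` in the unit polydisc `𝕀ⁿ` with
`liminf_{‖x‖ → ∞} ‖x‖^{m/n} ⟨A x - θ⟩ ≥ ε`. -/
def Bad (A : Matrix (Fin n) (Fin m) (FF K)) (ε : ℝ) : Set (Fin n → FF K) :=
  {θ | (∀ i, fnorm (θ i) < 1) ∧ ENNReal.ofReal ε ≤ badLiminf A θ}

/-- The set `Bad(A) = ⋃_{ε > 0} Bad^ε(A)`. -/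
def BadAll (A : Matrix (Fin n) (Fin m) (FF K)) : Set (Fin n → FF K) :=
  ⋃ (ε : ℝ) (_ : 0 < ε), Bad A ε

/-- `M(y) = ⟨Aᵀ y⟩` for a polynomial vector `y`. -/
def Mfun (A : Matrix (Fin n) (Fin m) (FF K)) (y : Fin n → Polynomial K) : ℝ :=
  vdist (A.transpose.mulVec (fun i => polyF (y i)))

/-- `y 1, y 2, …` is a sequence of best approximations related to `Aᵀ`:
`1 = Y_1 < Y_2 < ⋯`, `M_1 > M_2 > ⋯`, and `M(x) ≥ M_k` for every nonzero polynomial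
vector `x` with `‖x‖ < Y_{k+1}` (the value `y 0` is irrelevant). -/
def IsBestApproxSeq (A : Matrix (Fin n) (Fin m) (FF K))
    (y : ℕ → Fin n → Polynomial K) : Prop :=
  pnorm (y 1) = 1 ∧
  (∀ k, 1 ≤ k → pnorm (y k) < pnorm (y (k + 1))) ∧
  (∀ k, 1 ≤ k → Mfun A (y (k + 1)) < Mfun A (y k)) ∧
  (∀ k, 1 ≤ k → ∀ x : Fin n → Polynomial K, x ≠ 0 → pnorm x < pnorm (y (k + 1)) →
    Mfun A (y k) ≤ Mfun A x)

end Exponents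

section Scalar

/-- The system `⟨ξ x - θ⟩ ≤ H^{-ω}`, `‖x‖ ≤ H` has a polynomial solution `x`. -/
def sSolv (ξ θ : FF K) (ω H : ℝ) : Prop :=
  ∃ x : Polynomial K, sdist (ξ * polyF x - θ) ≤ H ^ (-ω) ∧ fnorm (polyF x) ≤ H

/-- The scalar inhomogeneous exponent `ω((ξ), θ)`. -/
def somegaInhom (ξ θ : FF K) : ℝ≥0∞ :=
  ⨆ (ω : ℝ) (_ : ∀ H₀ : ℝ, ∃ H : ℝ, H₀ ≤ H ∧ sSolv ξ θ ω H), ENNReal.ofReal ω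

/-- The scalar uniform inhomogeneous exponent `ω̂((ξ), θ)`. -/
def somegaHatInhom (ξ θ : FF K) : ℝ≥0∞ :=
  ⨆ (ω : ℝ) (_ : ∃ H₀ : ℝ, ∀ H : ℝ, H₀ ≤ H → sSolv ξ θ ω H), ENNReal.ofReal ω

/-- The scalar homogeneous exponent `ω((ξ))`. -/
def somegaHom (ξ : FF K) : ℝ≥0∞ :=
  ⨆ (ω : ℝ) (_ : ∀ H₀ : ℝ, ∃ H : ℝ, H₀ ≤ H ∧ ∃ x : Polynomial K, x ≠ 0 ∧
      sdist (ξ * polyF x) ≤ H ^ (-ω) ∧ fnorm (polyF x) ≤ H), ENNReal.ofReal ω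

/-- `liminf_{x ∈ 𝔽_q[z], ‖x‖ → ∞} ‖x‖ ⟨α x - θ⟩`, computed in `[0, ∞]`. -/
def sBadLiminf (α θ : FF K) : ℝ≥0∞ :=
  Filter.liminf
    (fun x : Polynomial K => ENNReal.ofReal (fnorm (polyF x) * sdist (α * polyF x - θ)))
    (Filter.comap (fun x : Polynomial K => fnorm (polyF x)) Filter.atTop)

/-- The set `Bad^ε(α)` of `θ ∈ 𝕀` with `liminf_{‖x‖ → ∞} ‖x‖ ⟨α x - θ⟩ ≥ ε`. -/
def sBad (α : FF K) (ε : ℝ) : Set (FF K) :=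
  {θ | fnorm θ < 1 ∧ ENNReal.ofReal ε ≤ sBadLiminf α θ}

end Scalar

section CF

/-- The Gauss map `T x = 1/x - [1/x]` on `𝔽_q((z⁻¹))`. -/
def gaussMap (x : FF K) : FF K := fracPart x⁻¹

/-- `pquot α k` is the `(k+1)`-st partial quotient `A_{k+1} = [1 / T^k α]` of the
continued fraction expansion of `α`. -/
def pquot (α : FF K) (k : ℕ) : Polynomial K := intPoly ((gaussMap^[k] α)⁻¹)

/-- `cfQ α k` is the denominator `Q_k` of the `k`-th convergent of the continued fraction
expansion of `α`: `Q_0 = 1`, `Q_1 = A_1`, `Q_{k+2} = A_{k+2} Q_{k+1} + Q_k`. -/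
def cfQ (α : FF K) : ℕ → Polynomial K
  | 0 => 1
  | 1 => pquot α 0
  | (k + 2) => pquot α (k + 1) * cfQ α (k + 1) + cfQ α k

/-- `α` is singular on average: for every `c > 0` the proportion of `l ∈ {1, …, N}` for
which `‖{Q α}‖ ≤ c 2^{-l}` has a solution `Q ∈ 𝔽_q[z]` with `0 < ‖Q‖ ≤ 2^l` tends to `1`
as `N → ∞`. -/
def SingularOnAverage (α : FF K) : Prop :=
  ∀ c : ℝ, 0 < c →
    Filter.Tendsto
      (fun N : ℕ =>
        (((Finset.Icc 1 N).filter (fun l : ℕ =>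
            ∃ Q : Polynomial K, Q ≠ 0 ∧ fnorm (polyF Q) ≤ 2 ^ l ∧
              fnorm (fracPart (polyF Q * α)) ≤ c / 2 ^ l)).card : ℝ) / (N : ℝ))
      Filter.atTop (nhds 1)

end CF

end FPSDA

open FPSDA MeasureTheory

/-!
The map `θ ↦ ⟨y · θ⟩` only sees the class of `y · θ` modulo polynomials. For `y ≠ 0` the map
`θ ↦ y · θ` sends the unit polydisc onto the open unit ball, so reading off the first `k`
coefficients after the point is a homomorphism of the polydisc onto `𝔽_q^k`; its kernel, which is
`{θ | ⟨y · θ⟩ < q^{-k}}`, carries the fraction `q^{-k}` of the measure. Distinct norms of polynomial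
vectors differ by a factor of at least `q`, so `Σ Y_i^{-δ}` converges and Borel–Cantelli applies on
the polydisc. The polynomial translates of the polydisc cover the space.
-/

section AddGroup

variable {G H : Type*} [AddGroup G] [MeasurableSpace G] [MeasurableAdd G] [AddGroup H]

lemma card_mul_measure_inter_ker [Finite H] (f : G →+ H) (N : AddSubgroup G) (hf : N.map f = ⊤)
    (hmeas : MeasurableSet (N ∩ f.ker : Set G)) (μ : Measure G) [μ.IsAddLeftInvariant] :
    Nat.card H * μ (N ∩ f.ker) = μ N := by
  have := Fintype.ofFinite H
  have fiber_eq (h : H) : ∃ a, (N ∩ f ⁻¹' {h} : Set G) = (fun x => a + x) ⁻¹' (N ∩ f.ker) := by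
    obtain ⟨a, haN, rfl⟩ : h ∈ N.map f := hf ▸ AddSubgroup.mem_top h
    refine ⟨-a, Set.ext fun x => and_congr ?_ ?_⟩
    · exact (N.add_mem_cancel_left (N.neg_mem haN)).symm
    · simp [AddMonoidHom.mem_ker, neg_add_eq_zero, eq_comm (a := f a)]
  have fiber_measurable (h : H) : MeasurableSet (N ∩ f ⁻¹' {h} : Set G) := by
    obtain ⟨a, ha⟩ := fiber_eq h
    exact ha ▸ measurable_const_add a hmeas
  have fiber_measure (h : H) : μ (N ∩ f ⁻¹' {h}) = μ (N ∩ f.ker) := by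
    obtain ⟨a, ha⟩ := fiber_eq h
    rw [ha, measure_preimage_add]
  calc Nat.card H * μ (N ∩ f.ker) = ∑ h : H, μ (N ∩ f ⁻¹' {h}) := by simp [fiber_measure]
    _ = μ (⋃ h : H, N ∩ f ⁻¹' {h}) := by
      rw [measure_iUnion (fun h h' hne => ?_) fiber_measurable, tsum_fintype]
      exact (Disjoint.preimage f (Set.disjoint_singleton.2 hne)).mono
        Set.inter_subset_right Set.inter_subset_right
    _ = μ N := by
      rw [← Set.inter_iUnion, ← Set.preimage_iUnion, Set.iUnion_of_singleton, Set.preimage_univ,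
        Set.inter_univ]

end AddGroup

lemma summable_rpow_neg_of_mul_le_succ {a : ℕ → ℝ} {r δ : ℝ} (hr : 1 < r) (hδ : 0 < δ)
    (hpos : ∀ᶠ i in atTop, 0 < a i) (ha : ∀ᶠ i in atTop, r * a i ≤ a (i + 1)) :
    Summable fun i => a i ^ (-δ) := by
  refine summable_of_ratio_norm_eventually_le
    (Real.rpow_lt_one_of_one_lt_of_neg hr (neg_lt_zero.2 hδ)) ?_
  filter_upwards [hpos, ha] with i hi hle
  have hri : 0 < r * a i := by positivity
  rw [Real.norm_of_nonneg (Real.rpow_nonneg (hri.le.trans hle) _),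
    Real.norm_of_nonneg (Real.rpow_nonneg hi.le _), ← Real.mul_rpow (by positivity) hi.le]
  exact Real.rpow_le_rpow_of_nonpos hri hle (neg_nonpos.2 hδ.le)

namespace FPSDA

open Polynomial

variable {K : Type*} [Field K]

section Polynomials

/-- `polyF` as a ring homomorphism. -/
def polyHom : K[X] →+* FF K :=
  (aeval (HahnSeries.single (-1 : ℤ) (1 : K))).toRingHom

lemma coe_polyHom : ⇑(polyHom : K[X] →+* FF K) = polyF := rfl

lemma toL_polyF_monomial (i : ℕ) (c : K) :
    toL (polyF (monomial i c)) = HahnSeries.single (-(i : ℤ)) c := by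
  rw [toL, polyF, aeval_monomial, LaurentSeries.algebraMap_apply, HahnSeries.single_pow,
    HahnSeries.C_apply, HahnSeries.single_mul_single]
  simp

lemma coeff_polyF (P : K[X]) (l : ℤ) :
    (toL (polyF P)).coeff l = if l ≤ 0 then P.coeff (-l).toNat else 0 := by
  induction P using Polynomial.induction_on' with
  | add P Q hP hQ =>
    have toL_add : toL (polyF (P + Q)) = toL (polyF P) + toL (polyF Q) := map_add polyHom P Q
    rw [toL_add, HahnSeries.coeff_add, hP, hQ]
    split_ifs <;> simp
  | monomial i c =>
    rw [toL_polyF_monomial, HahnSeries.coeff_single, coeff_monomial]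
    split_ifs <;> first | rfl | lia

lemma coeff_intPoly (x : FF K) (i : ℕ) : (intPoly x).coeff i = (toL x).coeff (-i) := by
  simp only [intPoly, finsetSum_coeff, coeff_monomial, Finset.sum_ite_eq', Finset.mem_range,
    ite_eq_left_iff]
  exact fun h => (HahnSeries.coeff_eq_zero_of_lt_order (by lia)).symm

lemma coeff_fracPart (x : FF K) (l : ℤ) :
    (toL (fracPart x)).coeff l = if 1 ≤ l then (toL x).coeff l else 0 := rfl

lemma sub_polyF_intPoly (x : FF K) : x - polyF (intPoly x) = fracPart x := by
  refine HahnSeries.ext (funext fun l => ?_)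
  change (toL x - toL (polyF (intPoly x))).coeff l = (toL (fracPart x)).coeff l
  rw [HahnSeries.coeff_sub, coeff_polyF, coeff_fracPart, coeff_intPoly]
  split_ifs <;> first | lia | simp [*]

end Polynomials

section FractionalCoefficients

/-- The first `k` coefficients after the point, `Σ a_i z^{-i} ↦ (a_1, …, a_k)`; the entry with
index `l : Fin k` is `a_{l+1}`. -/
def fracCoeff (k : ℕ) : FF K →+ (Fin k → K) where
  toFun x l := (toL x).coeff (l + 1)
  map_zero' := rfl
  map_add' _ _ := rfl

lemma fracCoeff_apply (k : ℕ) (x : FF K) (l : Fin k) :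
    fracCoeff k x l = (toL x).coeff (l + 1) := rfl

lemma fracCoeff_polyF (k : ℕ) (P : K[X]) : fracCoeff k (polyF P) = 0 := by
  ext l
  rw [fracCoeff_apply, coeff_polyF, if_neg (by lia), Pi.zero_apply]

lemma fracCoeff_fracPart (k : ℕ) (x : FF K) : fracCoeff k (fracPart x) = fracCoeff k x := by
  rw [← sub_polyF_intPoly, map_sub, fracCoeff_polyF, sub_zero]

lemma fracCoeff_surjective (k : ℕ) : Function.Surjective (fracCoeff k : FF K →+ _) := fun c => by
  let x : PowerSeries K := .mk fun n => if h : n - 1 < k then c ⟨n - 1, h⟩ else 0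
  refine ⟨(x : LaurentSeries K), funext fun l => ?_⟩
  change (x : LaurentSeries K).coeff ((l + 1 : ℕ) : ℤ) = c l
  rw [LaurentSeries.coeff_coe_powerSeries]
  simp [x]

end FractionalCoefficients

variable [Fintype K] {ι : Type*}

section Norm

variable (K) in
lemma one_lt_q : (1 : ℝ) < Fintype.card K :=
  Nat.one_lt_cast.2 Fintype.one_lt_card

lemma fnorm_of_ne_zero {x : FF K} (hx : x ≠ 0) :
    fnorm x = (Fintype.card K : ℝ) ^ (-(toL x).order) :=
  if_neg hx

lemma fnorm_mul (x y : FF K) : fnorm (x * y) = fnorm x * fnorm y := by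
  rcases eq_or_ne x 0 with rfl | hx
  · simp [fnorm_eq_zero.2]
  rcases eq_or_ne y 0 with rfl | hy
  · simp [fnorm_eq_zero.2]
  have order_mul : (toL (x * y)).order = (toL x).order + (toL y).order := HahnSeries.order_mul hx hy
  rw [fnorm_of_ne_zero hx, fnorm_of_ne_zero hy, fnorm_of_ne_zero (mul_ne_zero hx hy), order_mul,
    neg_add, zpow_add₀ (by positivity)]

instance instNormedFieldFF : NormedField (FF K) where
  norm := fnorm
  dist_eq x y := by
    rw [dist_comm, neg_add_eq_sub]
    rfl
  norm_mul := fnorm_mul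

lemma norm_eq_fnorm (x : FF K) : ‖x‖ = fnorm x := rfl

lemma fnorm_lt_zpow_neg_iff {x : FF K} {l : ℤ} :
    fnorm x < (Fintype.card K : ℝ) ^ (-l) ↔ ∀ i ≤ l, (toL x).coeff i = 0 := by
  rcases eq_or_ne x 0 with rfl | hx
  · rw [fnorm_eq_zero.2 rfl]
    exact iff_of_true (by positivity) fun i _ => rfl
  rw [fnorm_of_ne_zero hx, zpow_lt_zpow_iff_right₀ (one_lt_q K), neg_lt_neg_iff]
  refine ⟨fun h i hi => HahnSeries.coeff_eq_zero_of_lt_order (hi.trans_lt h), fun h => ?_⟩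
  by_contra! hle
  exact hx (HahnSeries.coeff_order_eq_zero.1 (h _ hle))

lemma card_mul_fnorm_le_of_lt {x y : FF K} (h : fnorm x < fnorm y) :
    Fintype.card K * fnorm x ≤ fnorm y := by
  rcases eq_or_ne x 0 with rfl | hx
  · simpa [fnorm_eq_zero.2] using fnorm_nonneg y
  have hy : y ≠ 0 := fun hy => (fnorm_nonneg x).not_gt (by rwa [fnorm_eq_zero.2 hy] at h)
  rw [fnorm_of_ne_zero hx, fnorm_of_ne_zero hy] at h ⊢
  rw [zpow_lt_zpow_iff_right₀ (one_lt_q K)] at h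
  rw [← zpow_one_add₀ (by positivity)]
  exact zpow_le_zpow_right₀ one_le_q (by lia)

lemma fnorm_polyF_X : fnorm (polyF X : FF K) = Fintype.card K := by
  have toL_eq : toL (polyF X : FF K) = HahnSeries.single (-1) 1 := by
    rw [← monomial_one_one_eq_X, toL_polyF_monomial, Nat.cast_one]
  rw [fnorm, toL_eq, if_neg (by simp), HahnSeries.order_single one_ne_zero, neg_neg, zpow_one]

lemma one_le_fnorm_polyF {P : K[X]} (hP : P ≠ 0) : 1 ≤ fnorm (polyF P) := by
  by_contra! h
  have hcoeff := fnorm_lt_zpow_neg_iff.1 (h.trans_eq (b := 1) (by simp : _ = _ ^ (-0 : ℤ)))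
  refine hP (Polynomial.ext fun i => ?_)
  simpa [coeff_polyF] using hcoeff (-i) (by simp)

lemma fracCoeff_eq_zero_of_fnorm_lt {k : ℕ} {x : FF K}
    (hx : fnorm x < (Fintype.card K : ℝ) ^ (-(k : ℤ))) : fracCoeff k x = 0 :=
  funext fun l => fnorm_lt_zpow_neg_iff.1 hx _ (by have := l.2; lia)

lemma fnorm_fracPart_lt_zpow_iff {k : ℕ} {x : FF K} :
    fnorm (fracPart x) < (Fintype.card K : ℝ) ^ (-(k : ℤ)) ↔ fracCoeff k x = 0 := by
  refine ⟨fun h => fracCoeff_fracPart k x ▸ fracCoeff_eq_zero_of_fnorm_lt h,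
    fun h => fnorm_lt_zpow_neg_iff.2 fun l hl => ?_⟩
  rw [coeff_fracPart]
  split_ifs with h1
  · have hcoeff := congrFun h ⟨(l - 1).toNat, by lia⟩
    rwa [fracCoeff_apply, Int.toNat_of_nonneg (by lia), sub_add_cancel] at hcoeff
  · rfl

lemma fnorm_fracPart_lt_one (x : FF K) : fnorm (fracPart x) < 1 := by
  simpa using fnorm_fracPart_lt_zpow_iff.2 (Subsingleton.elim (fracCoeff 0 x) 0)

end Norm

section VectorNorm

variable [Fintype ι]

lemma fnorm_le_vnorm (v : ι → FF K) (i : ι) : fnorm (v i) ≤ vnorm v :=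
  le_ciSup (f := fun i => fnorm (v i)) (Set.finite_range _).bddAbove i

lemma exists_fnorm_eq_vnorm [Nonempty ι] (v : ι → FF K) : ∃ i, fnorm (v i) = vnorm v :=
  exists_eq_ciSup_of_finite (f := fun i => fnorm (v i))

lemma vnorm_nonneg (v : ι → FF K) : 0 ≤ vnorm v :=
  Real.iSup_nonneg fun i => fnorm_nonneg (v i)

lemma card_mul_vnorm_le_of_lt {v w : ι → FF K} (h : vnorm v < vnorm w) :
    Fintype.card K * vnorm v ≤ vnorm w := by
  cases isEmpty_or_nonempty ι
  · simp [vnorm] at h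
  obtain ⟨i, hi⟩ := exists_fnorm_eq_vnorm v
  obtain ⟨j, hj⟩ := exists_fnorm_eq_vnorm w
  rw [← hi, ← hj] at h ⊢
  exact card_mul_fnorm_le_of_lt h

lemma pnorm_zero : pnorm (0 : ι → K[X]) = 0 := by
  simp [pnorm, vnorm, ← coe_polyHom, fnorm_eq_zero.2]

lemma one_le_pnorm {y : ι → K[X]} (hy : y ≠ 0) : 1 ≤ pnorm y := by
  obtain ⟨i, hi⟩ := Function.ne_iff.1 hy
  exact (one_le_fnorm_polyF hi).trans (fnorm_le_vnorm (fun i => polyF (y i)) i)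

end VectorNorm

section DistanceToPolynomials

lemma sdist_nonneg (x : FF K) : 0 ≤ sdist x :=
  Real.iInf_nonneg fun _ => fnorm_nonneg _

lemma sdist_lt_iff {x : FF K} {r : ℝ} : sdist x < r ↔ ∃ P : K[X], fnorm (x - polyF P) < r :=
  ciInf_lt_iff ⟨0, Set.forall_mem_range.2 fun _ => fnorm_nonneg _⟩

lemma sdist_add_polyF (x : FF K) (P : K[X]) : sdist (x + polyF P) = sdist x := by
  refine (Equiv.subRight P).iInf_congr fun Q => ?_
  rw [Equiv.subRight_apply, ← coe_polyHom, map_sub]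
  congr 1
  ring

lemma sdist_lt_zpow_iff {x : FF K} {k : ℕ} :
    sdist x < (Fintype.card K : ℝ) ^ (-(k : ℤ)) ↔ fracCoeff k x = 0 := by
  rw [sdist_lt_iff]
  refine ⟨fun ⟨P, hP⟩ => ?_, fun h => ⟨intPoly x, ?_⟩⟩
  · simpa [fracCoeff_polyF] using fracCoeff_eq_zero_of_fnorm_lt hP
  · rwa [sub_polyF_intPoly, fnorm_fracPart_lt_zpow_iff]

lemma isOpen_setOf_sdist_lt (r : ℝ) : IsOpen {x : FF K | sdist x < r} := by
  simp only [sdist_lt_iff, Set.ofPred_exists, ← norm_eq_fnorm]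
  exact isOpen_iUnion fun P => isOpen_lt (by fun_prop) continuous_const

end DistanceToPolynomials

section Topology

instance instCountablePolynomial {R : Type*} [Semiring R] [Countable R] : Countable R[X] :=
  Cardinal.mk_le_aleph0_iff.1 (cardinalMk_le_max.trans (max_le Cardinal.mk_le_aleph0 le_rfl))

lemma denseRange_polyF_div_X_pow :
    DenseRange fun p : K[X] × ℕ => (polyF p.1 / polyF X ^ p.2 : FF K) := by
  refine Metric.denseRange_iff.2 fun x r hr => ?_
  have hX : polyF X ≠ (0 : FF K) := fun h => by
    simpa [fnorm_polyF_X] using fnorm_eq_zero.2 h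
  obtain ⟨k, hk⟩ := exists_pow_lt_of_lt_one hr (inv_lt_one_of_one_lt₀ (one_lt_q K))
  refine ⟨(intPoly (x * polyF X ^ k), k), ?_⟩
  calc dist x (polyF (intPoly (x * polyF X ^ k)) / polyF X ^ k)
      = ‖fracPart (x * polyF X ^ k) / polyF X ^ k‖ := by
        rw [← sub_polyF_intPoly, sub_div, mul_div_cancel_right₀ _ (pow_ne_zero k hX), dist_eq_norm]
    _ = fnorm (fracPart (x * polyF X ^ k)) * (Fintype.card K : ℝ)⁻¹ ^ k := by
        rw [norm_div, norm_pow, norm_eq_fnorm, norm_eq_fnorm, fnorm_polyF_X, div_eq_mul_inv,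
          inv_pow]
    _ ≤ (Fintype.card K : ℝ)⁻¹ ^ k :=
        mul_le_of_le_one_left (by positivity) (fnorm_fracPart_lt_one _).le
    _ < r := hk

instance instSecondCountableTopologyFF : SecondCountableTopology (FF K) :=
  have : TopologicalSpace.SeparableSpace (FF K) :=
    .of_denseRange _ denseRange_polyF_div_X_pow
  UniformSpace.secondCountable_of_separable (FF K)

end Topology

section Polydisc

variable (K ι) in
/-- The open unit polydisc `{θ | ∀ i, ‖θ_i‖ < 1}`, an additive subgroup because the norm is
non-Archimedean. -/
def unitPolydisc : AddSubgroup (ι → FF K) where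
  carrier := {θ | ∀ i, fnorm (θ i) < 1}
  zero_mem' _ := by simp [fnorm_eq_zero.2]
  add_mem' ha hb i := (fnorm_add_le _ _).trans_lt (max_lt (ha i) (hb i))
  neg_mem' ha i := (fnorm_neg _).trans_lt (ha i)

lemma isOpen_unitPolydisc [Finite ι] : IsOpen (unitPolydisc K ι : Set (ι → FF K)) := by
  change IsOpen {θ : ι → FF K | ∀ i, ‖θ i‖ < 1}
  rw [Set.ofPred_forall]
  exact isOpen_iInter_of_finite fun i => isOpen_lt (by fun_prop) continuous_const

lemma exists_add_polyF_mem_unitPolydisc (θ : ι → FF K) :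
    ∃ P : ι → K[X], polyF ∘ P + θ ∈ unitPolydisc K ι := by
  refine ⟨fun i => -intPoly (θ i), fun i => ?_⟩
  have hfrac : (polyF (-intPoly (θ i)) : FF K) + θ i = fracPart (θ i) := by
    rw [← sub_polyF_intPoly, ← coe_polyHom, map_neg, neg_add_eq_sub]
  exact (congrArg fnorm hfrac).trans_lt (fnorm_fracPart_lt_one _)

lemma exists_mem_unitPolydisc_dotProduct_eq [Fintype ι] {v : ι → FF K} (hv : 1 ≤ vnorm v) {x : FF K}
    (hx : fnorm x < 1) : ∃ θ ∈ unitPolydisc K ι, v ⬝ᵥ θ = x := by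
  cases isEmpty_or_nonempty ι
  · norm_num [vnorm] at hv
  obtain ⟨j, hj⟩ := exists_fnorm_eq_vnorm v
  rw [← hj, ← norm_eq_fnorm] at hv
  have hvj : v j ≠ 0 := norm_pos_iff.1 (one_pos.trans_le hv)
  refine ⟨Pi.single j (x / v j), fun i => ?_, ?_⟩
  · rw [← norm_eq_fnorm] at hx ⊢
    rcases eq_or_ne i j with rfl | hij
    · rw [Pi.single_eq_same, norm_div]
      exact (div_le_self (norm_nonneg x) hv).trans_lt hx
    · simp [hij]
  · rw [dotProduct_single, mul_div_cancel₀ _ hvj]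

end Polydisc

section HaarMeasure

variable {μ : Measure (ι → FF K)} [μ.IsAddLeftInvariant]

lemma ae_of_ae_restrict_unitPolydisc [Finite ι] {p : (ι → FF K) → Prop}
    (hp : ∀ (P : ι → K[X]) (θ : ι → FF K), p (polyF ∘ P + θ) → p θ)
    (h : ∀ᵐ θ ∂μ.restrict (unitPolydisc K ι), p θ) : ∀ᵐ θ ∂μ, p θ := by
  rw [ae_restrict_iff' isOpen_unitPolydisc.measurableSet] at h
  have htranslate : ∀ᵐ θ ∂μ, ∀ P : ι → K[X],
      polyF ∘ P + θ ∈ unitPolydisc K ι → p (polyF ∘ P + θ) :=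
    ae_all_iff.2 fun P => (eventually_add_left_iff μ (polyF ∘ P)).2 h
  filter_upwards [htranslate] with θ hθ
  obtain ⟨P, hP⟩ := exists_add_polyF_mem_unitPolydisc θ
  exact hp P θ (hθ P hP)

variable [Fintype ι]

lemma card_pow_mul_measure_sdist_dotProduct_lt {v : ι → FF K} (hv : 1 ≤ vnorm v) (k : ℕ) :
    (Fintype.card K : ℝ≥0∞) ^ k *
      μ (unitPolydisc K ι ∩ {θ | sdist (v ⬝ᵥ θ) < (Fintype.card K : ℝ) ^ (-(k : ℤ))}) =
      μ (unitPolydisc K ι) := by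
  let f : (ι → FF K) →+ (Fin k → K) :=
    (fracCoeff k).comp (dotProductBilin (FF K) (FF K) v).toAddMonoidHom
  have hker : {θ | sdist (v ⬝ᵥ θ) < (Fintype.card K : ℝ) ^ (-(k : ℤ))} = (f.ker : Set _) :=
    Set.ext fun θ => sdist_lt_zpow_iff
  have hopen : IsOpen {θ | sdist (v ⬝ᵥ θ) < (Fintype.card K : ℝ) ^ (-(k : ℤ))} :=
    (isOpen_setOf_sdist_lt _).preimage (by fun_prop : Continuous fun θ => v ⬝ᵥ θ)
  have hmap : (unitPolydisc K ι).map f = ⊤ := by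
    refine eq_top_iff.2 fun c _ => ?_
    obtain ⟨x, rfl⟩ := fracCoeff_surjective k c
    obtain ⟨θ, hθ, hvθ⟩ := exists_mem_unitPolydisc_dotProduct_eq hv (fnorm_fracPart_lt_one x)
    exact ⟨θ, hθ, (congrArg (fracCoeff k) hvθ).trans (fracCoeff_fracPart k x)⟩
  rw [← card_mul_measure_inter_ker f _ hmap
    (hker ▸ (isOpen_unitPolydisc.inter hopen).measurableSet), hker]
  simp

lemma measure_sdist_dotProduct_lt_le {v : ι → FF K} (hv : 1 ≤ vnorm v) (ε : ℝ) :
    μ (unitPolydisc K ι ∩ {θ | sdist (v ⬝ᵥ θ) < ε}) ≤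
      ENNReal.ofReal (Fintype.card K * ε) * μ (unitPolydisc K ι) := by
  have hq := one_lt_q K
  rcases le_or_gt ε 0 with hε | hε
  · have hempty : {θ | sdist (v ⬝ᵥ θ) < ε} = ∅ :=
      Set.eq_empty_of_forall_notMem fun θ hθ => (hε.trans (sdist_nonneg _)).not_gt hθ
    simp [hempty]
  rcases le_or_gt 1 ε with hε1 | hε1
  · refine (measure_mono Set.inter_subset_left).trans (le_mul_of_one_le_left zero_le ?_)
    exact ENNReal.one_le_ofReal.2 (one_le_mul_of_one_le_of_one_le hq.le hε1)
  obtain ⟨k, hk, hk'⟩ := exists_nat_pow_near_of_lt_one hε hε1.le (inv_pos.2 (one_pos.trans hq))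
    (inv_lt_one_of_one_lt₀ hq)
  have hεk : ε ≤ (Fintype.card K : ℝ) ^ (-(k : ℤ)) := by rwa [zpow_neg, zpow_natCast, ← inv_pow]
  have hkε : 1 ≤ Fintype.card K * ε * Fintype.card K ^ k := by
    rw [inv_pow, inv_lt_iff_one_lt_mul₀ (by positivity), pow_succ] at hk
    linarith
  have hkε' : 1 ≤ ENNReal.ofReal (Fintype.card K * ε) * (Fintype.card K : ℝ≥0∞) ^ k := by
    rw [← ENNReal.ofReal_natCast, ← ENNReal.ofReal_pow (by positivity),
      ← ENNReal.ofReal_mul (by positivity)]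
    exact ENNReal.one_le_ofReal.2 hkε
  calc μ (unitPolydisc K ι ∩ {θ | sdist (v ⬝ᵥ θ) < ε})
      ≤ μ (unitPolydisc K ι ∩ {θ | sdist (v ⬝ᵥ θ) < (Fintype.card K : ℝ) ^ (-(k : ℤ))}) :=
        measure_mono (Set.inter_subset_inter_right _ fun θ hθ => lt_of_lt_of_le hθ hεk)
    _ ≤ ENNReal.ofReal (Fintype.card K * ε) * μ (unitPolydisc K ι) := by
        rw [← card_pow_mul_measure_sdist_dotProduct_lt hv k, ← mul_assoc]
        exact le_mul_of_one_le_left zero_le hkε'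

lemma ae_eventually_le_sdist_of_summable (hμ : μ (unitPolydisc K ι) ≠ ∞) (y : ℕ → ι → K[X])
    {ε : ℕ → ℝ} (hε : Summable ε) :
    ∀ᵐ θ ∂μ, ∀ᶠ i in atTop, y i ≠ 0 → ε i ≤ sdist ((polyF ∘ y i) ⬝ᵥ θ) := by
  refine ae_of_ae_restrict_unitPolydisc (fun P θ h => ?_) ?_
  · have hdot (i : ℕ) : (polyF ∘ y i) ⬝ᵥ (polyF ∘ P + θ) =
        (polyF ∘ y i) ⬝ᵥ θ + polyF (y i ⬝ᵥ P) := by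
      rw [dotProduct_add, add_comm, ← coe_polyHom, RingHom.map_dotProduct]
    simpa only [hdot, sdist_add_polyF] using h
  let s (i : ℕ) : Set (ι → FF K) := {θ | y i ≠ 0 ∧ sdist ((polyF ∘ y i) ⬝ᵥ θ) < ε i}
  have measure_s_le (i : ℕ) : μ.restrict (unitPolydisc K ι) (s i) ≤
      ENNReal.ofReal (Fintype.card K * ε i) * μ (unitPolydisc K ι) := by
    rw [Measure.restrict_apply' isOpen_unitPolydisc.measurableSet, Set.inter_comm]
    by_cases hy : y i = 0
    · simp [s, hy]
    · exact (measure_mono (Set.inter_subset_inter_right _ fun θ hθ => hθ.2)).trans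
        (measure_sdist_dotProduct_lt_le (v := polyF ∘ y i) (one_le_pnorm hy) (ε i))
  have tsum_ne_top : ∑' i, μ.restrict (unitPolydisc K ι) (s i) ≠ ∞ := by
    refine ne_top_of_le_ne_top ?_ (ENNReal.tsum_le_tsum measure_s_le)
    rw [ENNReal.tsum_mul_right]
    exact ENNReal.mul_ne_top (hε.mul_left _).tsum_ofReal_ne_top hμ
  filter_upwards [ae_eventually_notMem tsum_ne_top] with θ hθ
  filter_upwards [hθ] with i hi hy
  exact not_lt.1 fun hlt => hi ⟨hy, hlt⟩

end HaarMeasure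

section IncreasingNorms

variable [Fintype ι] {y : ℕ → ι → K[X]}

lemma eventually_ne_zero_of_pnorm_lt_succ (hy : ∀ᶠ i in atTop, pnorm (y i) < pnorm (y (i + 1))) :
    ∀ᶠ i in atTop, y i ≠ 0 := by
  obtain ⟨N, hN⟩ := eventually_atTop.1 hy
  refine eventually_atTop.2 ⟨N + 1, fun i hi h => ?_⟩
  obtain ⟨i, rfl⟩ := Nat.exists_eq_add_of_le' hi
  have hlt := hN (i + N) (Nat.le_add_left N i)
  rw [← add_assoc] at h
  rw [h, pnorm_zero] at hlt
  exact (vnorm_nonneg _).not_gt hlt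

lemma summable_pnorm_rpow_neg (hy : ∀ᶠ i in atTop, pnorm (y i) < pnorm (y (i + 1))) {δ : ℝ}
    (hδ : 0 < δ) : Summable fun i => pnorm (y i) ^ (-δ) :=
  summable_rpow_neg_of_mul_le_succ (one_lt_q K) hδ
    ((eventually_ne_zero_of_pnorm_lt_succ hy).mono fun _ h => one_pos.trans_le (one_le_pnorm h))
    (hy.mono fun _ h => card_mul_vnorm_le_of_lt h)

end IncreasingNorms

end FPSDA

theorem best_approx_ae_general {K : Type*} [Field K] [Fintype K] {ι : Type*} [Fintype ι]
    {y : ℕ → ι → Polynomial K} (hy : ∀ᶠ i in atTop, pnorm (y i) < pnorm (y (i + 1)))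
    {μ : Measure (ι → FF K)} [μ.IsAddLeftInvariant]
    (hμ : μ {θ : ι → FF K | ∀ i, fnorm (θ i) < 1} ≠ ∞) :
    ∀ᵐ θ ∂μ, ∀ δ : ℝ, 0 < δ →
      ∀ᶠ i in atTop, pnorm (y i) ^ (-δ) ≤ sdist (∑ j, polyF (y i j) * θ j) := by
  have h (N : ℕ) := ae_eventually_le_sdist_of_summable hμ y
    (summable_pnorm_rpow_neg hy (δ := 1 / (N + 1)) (by positivity))
  filter_upwards [ae_all_iff.2 h] with θ hθ δ hδ
  obtain ⟨N, hN⟩ := exists_nat_one_div_lt hδ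
  filter_upwards [hθ N, eventually_ne_zero_of_pnorm_lt_succ hy] with i hi hi0
  calc pnorm (y i) ^ (-δ) ≤ pnorm (y i) ^ (-(1 / (N + 1) : ℝ)) :=
        Real.rpow_le_rpow_of_exponent_le (one_le_pnorm hi0) (neg_le_neg hN.le)
    _ ≤ sdist (∑ j, polyF (y i j) * θ j) := hi hi0

/-- For a sequence of best approximations `(y_i)_{i ≥ 1}` related to `Aᵀ` and almost all
`θ` with respect to the Haar measure on `𝔽_q((z⁻¹))ⁿ` (formalized as: any
translation-invariant Borel measure normalized on the unit polydisc), for every `δ > 0`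
one has `⟨y_{i1}θ₁ + ⋯ + y_{in}θ_n⟩ ≥ Y_i^{-δ}` for all sufficiently large `i`. -/
theorem best_approx_ae {K : Type*} [Field K] [Fintype K] {m n : ℕ}
    (hm : 0 < m) (hn : 0 < n)
    (A : Matrix (Fin n) (Fin m) (FF K)) (hA : Nondegenerate A)
    (y : ℕ → Fin n → Polynomial K) (hy : IsBestApproxSeq A y)
    (μ : Measure (Fin n → FF K))
    (hinv : ∀ a : Fin n → FF K, ∀ s : Set (Fin n → FF K), MeasurableSet s →
      μ ((fun θ => a + θ) ⁻¹' s) = μ s)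
    (hone : μ {θ : Fin n → FF K | ∀ i, fnorm (θ i) < 1} = 1) :
    ∀ᵐ θ ∂μ, ∀ δ : ℝ, 0 < δ →
      ∃ i₀, ∀ i, i₀ ≤ i → 1 ≤ i →
        pnorm (y i) ^ (-δ) ≤ sdist (∑ j, polyF (y i j) * θ j) := by
  have := (forall_measure_preimage_add_iff μ).1 hinv
  filter_upwards [best_approx_ae_general (eventually_atTop.2 ⟨1, hy.2.1⟩) (by simp [hone])]
    with θ hθ δ hδ
  exact (eventually_atTop.1 (hθ δ hδ)).imp fun _ h i hi _ => h i hi
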